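/- Let F1 and F2 be CNF formulas with var(F1) ∩ var(F2) = B, let β : B → {0,1} be an assignment, and let P be any set of variables. Then |{γ restricted to P : γ : var(F1) ∪ var(F2) → {0,1}, γ extends β, γ satisfies F1 ∪ F2}| = |{γ1 restricted to P : γ1 : var(F1) → {0,1}, γ1 extends β, γ1 satisfies F1}| · |{γ2 restricted to P : γ2 : var(F2) → {0,1}, γ2 extends β, γ2 satisfies F2}|; i.e., the number of distinct P-projections of satisfying extensions of β multiplies across the two formulas joined on B. -/

import Mathlib

/-- Propositional variables. -/
abbrev Var : Type := ℕ

/-- A literal is a variable together with a polarity: `(x, true)` is the positive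
literal `x` and `(x, false)` is the negative literal `¬x`. -/
abbrev Lit : Type := Var × Bool

/-- A clause is a finite set of literals (interpreted as their disjunction). -/
abbrev Clause : Type := Finset Lit

/-- A CNF formula is a finite set of clauses (interpreted as their conjunction). -/
abbrev CNF : Type := Finset Clause

/-- The variables occurring in a clause. -/
def clauseVars (c : Clause) : Finset Var := c.image Prod.fst

/-- The variables `var(F)` occurring in a CNF formula `F`. -/
def cnfVars (F : CNF) : Finset Var := F.sup clauseVars

/-- A literal is set to `1` (true) by an assignment `γ`. -/
def litTrue (γ : Var → Bool) (l : Lit) : Prop := γ l.1 = l.2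

instance (γ : Var → Bool) (l : Lit) : Decidable (litTrue γ l) :=
  inferInstanceAs (Decidable (γ l.1 = l.2))

/-- `γ` satisfies `F`: every clause contains a literal set to `1` by `γ`. -/
def satisfies (γ : Var → Bool) (F : CNF) : Prop := ∀ c ∈ F, ∃ l ∈ c, litTrue γ l

instance (γ : Var → Bool) (F : CNF) : Decidable (satisfies γ F) :=
  inferInstanceAs (Decidable (∀ c ∈ F, ∃ l ∈ c, litTrue γ l))

/-- `F` is satisfiable: some (total) assignment satisfies it. -/
def Satisfiable (F : CNF) : Prop := ∃ γ : Var → Bool, satisfies γ F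

/-- Extend an assignment defined on the variables in `D` to a total assignment
(variables outside `D` get an irrelevant default value). -/
def extendAssign (D : Finset Var) (γ : {x // x ∈ D} → Bool) : Var → Bool :=
  fun x => if h : x ∈ D then γ ⟨x, h⟩ else false

/-- The formula `F[α]` under an assignment `α` of the variables in `U`:
remove every clause containing a literal set to `1` by `α`, and remove from the
remaining clauses all literals over `U` (those are exactly the ones set to `0`
by `α` in the remaining clauses). -/
def restrictCNF (F : CNF) (U : Finset Var) (α : Var → Bool) : CNF :=
  (F.filter fun c => ¬ ∃ l ∈ c, l.1 ∈ U ∧ litTrue α l).image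
    fun c => c.filter fun l => l.1 ∉ U

/-- The restriction of an assignment `γ` on the variables `D` to an arbitrary set
`P` of variables, i.e., the restriction of `γ` to `D ∩ P`. -/
def projAssign (D : Finset Var) (P : Set Var) (γ : {x // x ∈ D} → Bool) :
    {x : Var // x ∈ D ∧ x ∈ P} → Bool :=
  fun x => γ ⟨x.1, x.2.1⟩

/-- Satisfaction of `F` depends only on the values at the variables of `F`. -/
theorem satisfies_congr {F : CNF} {γ δ : Var → Bool} (h : ∀ x ∈ cnfVars F, γ x = δ x) :
    satisfies γ F ↔ satisfies δ F := by
  have key : ∀ c ∈ F, ∀ l ∈ c, γ l.1 = δ l.1 := fun c hc l hl =>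
    h l.1 (Finset.mem_of_subset (Finset.le_sup (f := clauseVars) hc)
      (Finset.mem_image_of_mem Prod.fst hl))
  refine forall₂_congr fun c hc => exists_congr fun l => and_congr_right fun hl => ?_
  simp only [litTrue, key c hc l hl]

theorem satisfies_union {γ : Var → Bool} {F G : CNF} :
    satisfies γ (F ∪ G) ↔ satisfies γ F ∧ satisfies γ G := by
  simp only [satisfies, Finset.mem_union, or_imp, forall_and]

theorem extendAssign_of_mem {D : Finset Var} (γ : {x // x ∈ D} → Bool) {x : Var} (hx : x ∈ D) :
    extendAssign D γ x = γ ⟨x, hx⟩ :=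
  dif_pos hx

/-- Split a projected assignment on `D₁ ∪ D₂` into its parts on `D₁` and on `D₂`. -/
def splitProj (D₁ D₂ : Finset Var) (P : Set Var)
    (p : {x : Var // x ∈ D₁ ∪ D₂ ∧ x ∈ P} → Bool) :
    ({x : Var // x ∈ D₁ ∧ x ∈ P} → Bool) × ({x : Var // x ∈ D₂ ∧ x ∈ P} → Bool) :=
  (fun x => p ⟨x.1, Finset.mem_union_left _ x.2.1, x.2.2⟩,
    fun x => p ⟨x.1, Finset.mem_union_right _ x.2.1, x.2.2⟩)

theorem splitProj_injective (D₁ D₂ : Finset Var) (P : Set Var) :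
    Function.Injective (splitProj D₁ D₂ P) := by
  intro p q h
  funext ⟨x, hx, hP⟩
  rcases Finset.mem_union.1 hx with h₁ | h₂
  · exact congrFun (congrArg Prod.fst h) ⟨x, h₁, hP⟩
  · exact congrFun (congrArg Prod.snd h) ⟨x, h₂, hP⟩

/-- Projected counts multiply across a join: for CNF formulas `F1, F2` with
`var(F1) ∩ var(F2) = B`, an assignment `β : B → {0,1}` and any set `P` of variables,
the number of distinct restrictions to `P` of total satisfying assignments of
`F1 ∪ F2` extending `β` equals the product of the corresponding numbers for `F1`
and `F2`. -/
theorem projected_count_join_mul (F1 F2 : CNF) (B : Finset Var)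
    (hB : cnfVars F1 ∩ cnfVars F2 = B) (β : {x // x ∈ B} → Bool) (P : Set Var) :
    (projAssign (cnfVars F1 ∪ cnfVars F2) P ''
        {γ : {x // x ∈ cnfVars F1 ∪ cnfVars F2} → Bool |
          (∀ (x : {x // x ∈ cnfVars F1 ∪ cnfVars F2}) (hx : x.1 ∈ B),
              γ x = β ⟨x.1, hx⟩) ∧
          satisfies (extendAssign _ γ) (F1 ∪ F2)}).ncard
      = (projAssign (cnfVars F1) P ''
          {γ1 : {x // x ∈ cnfVars F1} → Bool |
            (∀ (x : {x // x ∈ cnfVars F1}) (hx : x.1 ∈ B), γ1 x = β ⟨x.1, hx⟩) ∧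
            satisfies (extendAssign _ γ1) F1}).ncard *
        (projAssign (cnfVars F2) P ''
          {γ2 : {x // x ∈ cnfVars F2} → Bool |
            (∀ (x : {x // x ∈ cnfVars F2}) (hx : x.1 ∈ B), γ2 x = β ⟨x.1, hx⟩) ∧
            satisfies (extendAssign _ γ2) F2}).ncard := by
  rw [← Set.ncard_prod, ← Set.ncard_image_of_injective _ (splitProj_injective _ _ P)]
  congr 1
  ext ⟨p₁, p₂⟩
  constructor
  · rintro ⟨_, ⟨γ, ⟨hβ, hγ⟩, rfl⟩, hp⟩
    obtain ⟨rfl, rfl⟩ := Prod.mk.inj hp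
    obtain ⟨hγ₁, hγ₂⟩ := satisfies_union.1 hγ
    refine ⟨⟨fun x => γ ⟨x.1, Finset.mem_union_left _ x.2⟩,
        ⟨fun x hx => hβ ⟨x.1, _⟩ hx, (satisfies_congr fun x hx => ?_).1 hγ₁⟩, rfl⟩,
      ⟨fun x => γ ⟨x.1, Finset.mem_union_right _ x.2⟩,
        ⟨fun x hx => hβ ⟨x.1, _⟩ hx, (satisfies_congr fun x hx => ?_).1 hγ₂⟩, rfl⟩⟩
    · rw [extendAssign_of_mem _ hx, extendAssign_of_mem _ (Finset.mem_union_left _ hx)]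
    · rw [extendAssign_of_mem _ hx, extendAssign_of_mem _ (Finset.mem_union_right _ hx)]
  · rintro ⟨⟨γ₁, ⟨hβ₁, hγ₁⟩, rfl⟩, ⟨γ₂, ⟨hβ₂, hγ₂⟩, rfl⟩⟩
    let γ : {x // x ∈ cnfVars F1 ∪ cnfVars F2} → Bool := fun x =>
      if x.1 ∈ cnfVars F1 then extendAssign _ γ₁ x.1 else extendAssign _ γ₂ x.1
    have eq₁ : ∀ x (hx : x ∈ cnfVars F1), γ ⟨x, Finset.mem_union_left _ hx⟩ = γ₁ ⟨x, hx⟩ :=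
      fun x hx => (if_pos hx).trans (extendAssign_of_mem γ₁ hx)
    have eq₂ : ∀ x (hx : x ∈ cnfVars F2), γ ⟨x, Finset.mem_union_right _ hx⟩ = γ₂ ⟨x, hx⟩ := by
      intro x hx
      by_cases h : x ∈ cnfVars F1
      · have hxB : x ∈ B := hB ▸ Finset.mem_inter.2 ⟨h, hx⟩
        rw [eq₁ x h, hβ₁ ⟨x, h⟩ hxB, hβ₂ ⟨x, hx⟩ hxB]
      · exact (if_neg h).trans (extendAssign_of_mem γ₂ hx)
    refine ⟨_, ⟨γ, ⟨fun x hx => ?_, satisfies_union.2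
      ⟨(satisfies_congr fun x hx => ?_).1 hγ₁, (satisfies_congr fun x hx => ?_).1 hγ₂⟩⟩, rfl⟩,
      Prod.ext (funext fun x => eq₁ x.1 x.2.1) (funext fun x => eq₂ x.1 x.2.1)⟩
    · have h₁ : x.1 ∈ cnfVars F1 := (Finset.mem_inter.1 (hB.symm ▸ hx)).1
      exact (eq₁ x.1 h₁).trans (hβ₁ ⟨x.1, h₁⟩ hx)
    · rw [extendAssign_of_mem _ hx, extendAssign_of_mem _ (Finset.mem_union_left _ hx), eq₁ x hx]
    · rw [extendAssign_of_mem _ hx, extendAssign_of_mem _ (Finset.mem_union_right _ hx), eq₂ x hx]
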